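/- Let S be a right coherent monoid and let J be a monoid 𝓙-class of S. Then J, regarded as a monoid under the multiplication of S, is right coherent. -/

import Mathlib

def IsRightCongruence {M : Type*} [Monoid M] (r : M → M → Prop) : Prop :=
  Equivalence r ∧ ∀ a b c : M, r a b → r (a * c) (b * c)

def RCongGenBy {M : Type*} [Monoid M] (H : Set (M × M)) (r : M → M → Prop) : Prop :=
  IsRightCongruence r ∧ (∀ p ∈ H, r p.1 p.2) ∧
    ∀ r' : M → M → Prop, IsRightCongruence r' → (∀ p ∈ H, r' p.1 p.2) →
      ∀ x y : M, r x y → r' x y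

def FGRightCongruence {M : Type*} [Monoid M] (r : M → M → Prop) : Prop :=
  ∃ H : Set (M × M), H.Finite ∧ RCongGenBy H r

def RightCoherent (M : Type*) [Monoid M] : Prop :=
  ∀ r : M → M → Prop, FGRightCongruence r → ∀ a b : M,
    (∃ C : Finset M,
      {x : M | (∃ s : M, r x (a * s)) ∧ (∃ t : M, r x (b * t))} =
        ⋃ c ∈ C, {x : M | ∃ s : M, r x (c * s)}) ∧
    FGRightCongruence (fun u v : M => r (a * u) (a * v))

/-!
Let `e` be the identity of `J` and `T = {x ∈ S | ex ∈ J}`. Then `T` is a submonoid of `S`, and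
`x ↦ ex` retracts it onto `J`. Moreover `S \ T` is an ideal: if `exy ∈ J` then `exy = ex · ey`, so
`ex` and `ey` both lie in `SeS` and divide an element of `J`, hence belong to the `𝓙`-class `J`.
Right coherence passes to submonoids whose complement is an ideal and to retracts, hence from `S` to
`T` and from `T` to `J`.
-/

theorem rightCoherent_iff {M : Type*} [Monoid M] :
    RightCoherent M ↔ ∀ r : M → M → Prop, FGRightCongruence r → ∀ a b : M,
      (∃ C : Finset M, ∀ x : M,
        (∃ s, r x (a * s)) ∧ (∃ t, r x (b * t)) ↔ ∃ c ∈ C, ∃ s, r x (c * s)) ∧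
      FGRightCongruence (fun u v : M => r (a * u) (a * v)) := by
  simp only [RightCoherent, Set.ext_iff, Set.mem_ofPred_eq, Set.mem_iUnion, exists_prop]

section Congruence

variable {M N : Type*} [Monoid M] [Monoid N]

theorem IsRightCongruence.comap {r : N → N → Prop} (hr : IsRightCongruence r) (f : M →ₙ* N) :
    IsRightCongruence fun x y => r (f x) (f y) :=
  ⟨hr.1.comap f, fun a b c h => by simpa only [map_mul] using hr.2 _ _ (f c) h⟩

theorem IsRightCongruence.annihilator {r : M → M → Prop} (hr : IsRightCongruence r) (a : M) :
    IsRightCongruence fun u v => r (a * u) (a * v) :=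
  ⟨hr.1.comap (a * ·), fun u v c h => by simpa only [mul_assoc] using hr.2 _ _ c h⟩

theorem FGRightCongruence.isRightCongruence {r : M → M → Prop} (hr : FGRightCongruence r) :
    IsRightCongruence r :=
  let ⟨_, _, h⟩ := hr
  h.1

theorem exists_rCongGenBy (H : Set (M × M)) : ∃ r : M → M → Prop, RCongGenBy H r :=
  ⟨fun x y => ∀ r' : M → M → Prop, IsRightCongruence r' → (∀ p ∈ H, r' p.1 p.2) → r' x y,
    ⟨⟨fun x _ hr' _ => hr'.1.refl x,
      fun h r' hr' hH => hr'.1.symm (h r' hr' hH),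
      fun h h' r' hr' hH => hr'.1.trans (h r' hr' hH) (h' r' hr' hH)⟩,
      fun _ _ c h r' hr' hH => hr'.2 _ _ c (h r' hr' hH)⟩,
    fun p hp _ _ hH => hH p hp,
    fun r' hr' hH _ _ h => h r' hr' hH⟩

theorem RCongGenBy.map_rel {H : Set (M × M)} {ρ : M → M → Prop} {r : N → N → Prop}
    (hρ : RCongGenBy H ρ) (hr : IsRightCongruence r) (f : M →ₙ* N)
    (hH : ∀ p ∈ H, r (f p.1) (f p.2)) {x y : M} (hxy : ρ x y) : r (f x) (f y) :=
  hρ.2.2 _ (hr.comap f) hH x y hxy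

end Congruence

section Retract

variable {M N : Type*} [Monoid M] [Monoid N] {f : N →ₙ* M} {g : M →ₙ* N}

theorem FGRightCongruence.exists_extension_of_leftInverse (hgf : Function.LeftInverse g f)
    {r : N → N → Prop} (hr : FGRightCongruence r) :
    ∃ ρ : M → M → Prop, FGRightCongruence ρ ∧ (∀ u v, r u v → ρ (f u) (f v)) ∧
      ∀ x y, ρ x y → r (g x) (g y) := by
  obtain ⟨H, hfin, hr⟩ := hr
  obtain ⟨ρ, hρ⟩ := exists_rCongGenBy (Prod.map f f '' H)
  refine ⟨ρ, ⟨_, hfin.image _, hρ⟩, fun u v => hr.map_rel hρ.1 f ?_,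
    fun x y => hρ.map_rel hr.1 g ?_⟩
  · exact fun p hp => hρ.2.1 _ (Set.mem_image_of_mem _ hp)
  · rintro _ ⟨p, hp, rfl⟩
    simpa only [Prod.map_fst, Prod.map_snd, hgf _] using hr.2.1 p hp

theorem FGRightCongruence.of_leftInverse (hgf : Function.LeftInverse g f)
    {ρ : M → M → Prop} {r : N → N → Prop} (hρ : FGRightCongruence ρ) (hr : IsRightCongruence r)
    (hf : ∀ u v, r u v → ρ (f u) (f v)) (hg : ∀ x y, ρ x y → r (g x) (g y)) :
    FGRightCongruence r := by
  obtain ⟨K, hfin, hρ⟩ := hρ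
  refine ⟨Prod.map g g '' K, hfin.image _, hr, ?_, fun σ hσ hK u v huv => ?_⟩
  · rintro _ ⟨p, hp, rfl⟩
    exact hg _ _ (hρ.2.1 p hp)
  · have hσuv : σ (g (f u)) (g (f v)) :=
      hρ.map_rel hσ g (fun p hp => hK _ (Set.mem_image_of_mem _ hp)) (hf u v huv)
    rwa [hgf, hgf] at hσuv

theorem RightCoherent.of_leftInverse (hM : RightCoherent M) (hgf : Function.LeftInverse g f) :
    RightCoherent N := by
  classical
  rw [rightCoherent_iff] at hM ⊢
  intro r hr a b
  obtain ⟨ρ, hρ, hfρ, hgr⟩ := hr.exists_extension_of_leftInverse hgf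
  have hrc := hr.isRightCongruence
  obtain ⟨⟨C, hC⟩, hann⟩ := hM ρ hρ (f a) (f b)
  have rel_of_rel_mul {x : M} {d : N} {s : M} (h : ρ x (f d * s)) : r (g x) (d * g s) := by
    simpa only [map_mul, hgf _] using hgr _ _ h
  have rel_mul_of_rel {x d s : N} (h : r x (d * s)) : ρ (f x) (f d * f s) := by
    simpa only [map_mul] using hfρ _ _ h
  refine ⟨⟨C.image g, fun x => ?_⟩, ?_⟩
  · rw [Finset.exists_mem_image]
    constructor
    · rintro ⟨⟨s, hs⟩, t, ht⟩
      obtain ⟨c, hc, u, hu⟩ := (hC (f x)).1 ⟨⟨_, rel_mul_of_rel hs⟩, _, rel_mul_of_rel ht⟩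
      exact ⟨c, hc, g u, by simpa only [map_mul, hgf _] using hgr _ _ hu⟩
    · rintro ⟨c, hc, s, hs⟩
      obtain ⟨⟨u, hu⟩, v, hv⟩ :=
        (hC c).2 ⟨c, hc, 1, by simpa only [mul_one] using hρ.isRightCongruence.1.refl c⟩
      have rel_mul {d : N} {w : M} (h : ρ c (f d * w)) : r x (d * (g w * s)) := by
        simpa only [mul_assoc] using hrc.1.trans hs (hrc.2 _ _ s (rel_of_rel_mul h))
      exact ⟨⟨_, rel_mul hu⟩, _, rel_mul hv⟩
  · refine hann.of_leftInverse hgf (hrc.annihilator a) (fun u v h => ?_) fun x y h => ?_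
    · simpa only [map_mul] using hfρ _ _ h
    · simpa only [map_mul, hgf _] using hgr _ _ h

end Retract

section Saturated

variable {S : Type*} [Monoid S] {T : Submonoid S}

/-- The extension of a relation `σ` on a submonoid `T` of `S` to `S` which relates all elements
outside `T` to each other, and to none in `T`. For saturated `T` it turns right congruences on `T`
into right congruences on `S`. -/
def extendByCompl (σ : T → T → Prop) (x y : S) : Prop :=
  (x ∈ T ↔ y ∈ T) ∧ ∀ (hx : x ∈ T) (hy : y ∈ T), σ ⟨x, hx⟩ ⟨y, hy⟩

theorem IsRightCongruence.extendByCompl (hT : T.MulSaturated) {σ : T → T → Prop}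
    (hσ : IsRightCongruence σ) : IsRightCongruence (extendByCompl σ) := by
  refine ⟨⟨fun x => ⟨Iff.rfl, fun _ _ => hσ.1.refl _⟩,
    fun h => ⟨h.1.symm, fun hx hy => hσ.1.symm (h.2 hy hx)⟩,
    fun h h' => ⟨h.1.trans h'.1, fun hx hz =>
      hσ.1.trans (h.2 hx (h.1.1 hx)) (h'.2 (h.1.1 hx) hz)⟩⟩, fun a b c h => ⟨?_, ?_⟩⟩
  · rw [hT.mul_mem_iff, hT.mul_mem_iff, h.1]
  · intro hac hbc
    exact hσ.2 _ _ ⟨c, (hT hac).2⟩ (h.2 (hT hac).1 (hT hbc).1)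

theorem RCongGenBy.extendByCompl_rel (hT : T.MulSaturated) {H : Set (S × S)} {ρ : S → S → Prop}
    (hρ : RCongGenBy H ρ) {σ : T → T → Prop} (hσ : IsRightCongruence σ)
    (hH : ∀ p ∈ H, extendByCompl σ p.1 p.2) {x y : S} (hxy : ρ x y) : extendByCompl σ x y :=
  hρ.2.2 _ (hσ.extendByCompl hT) hH x y hxy

theorem FGRightCongruence.exists_extension (hT : T.MulSaturated) {r : T → T → Prop}
    (hr : FGRightCongruence r) :
    ∃ ρ : S → S → Prop, FGRightCongruence ρ ∧ (∀ x y : T, ρ x y ↔ r x y) ∧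
      ∀ x y, ρ x y → (x ∈ T ↔ y ∈ T) := by
  obtain ⟨H, hfin, hr⟩ := hr
  obtain ⟨ρ, hρ⟩ := exists_rCongGenBy (Prod.map T.subtype T.subtype '' H)
  have hρr : ∀ x y, ρ x y → extendByCompl r x y := fun x y => by
    refine hρ.extendByCompl_rel hT hr.1 ?_
    rintro _ ⟨p, hp, rfl⟩
    exact ⟨iff_of_true p.1.2 p.2.2, fun _ _ => hr.2.1 p hp⟩
  have hrρ : ∀ x y : T, r x y → ρ x y := fun x y =>
    hr.map_rel hρ.1 T.subtype.toMulHom fun p hp => hρ.2.1 _ (Set.mem_image_of_mem _ hp)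
  exact ⟨ρ, ⟨_, hfin.image _, hρ⟩, fun x y => ⟨fun h => (hρr x y h).2 x.2 y.2, hrρ x y⟩,
    fun x y h => (hρr x y h).1⟩

theorem FGRightCongruence.restrict (hT : T.MulSaturated) {ρ : S → S → Prop}
    (hρ : FGRightCongruence ρ) (hρT : ∀ x y, ρ x y → (x ∈ T ↔ y ∈ T)) :
    FGRightCongruence fun x y : T => ρ x y := by
  obtain ⟨K, hfin, hρ⟩ := hρ
  refine ⟨Prod.map T.subtype T.subtype ⁻¹' K,
    hfin.preimage (T.subtype_injective.prodMap T.subtype_injective).injOn,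
    hρ.1.comap T.subtype.toMulHom, fun p hp => hρ.2.1 _ hp, fun σ hσ hK x y hxy => ?_⟩
  have hKσ : ∀ p ∈ K, extendByCompl σ p.1 p.2 := fun p hp =>
    ⟨hρT _ _ (hρ.2.1 p hp), fun h₁ h₂ => hK (⟨p.1, h₁⟩, ⟨p.2, h₂⟩) hp⟩
  exact (hρ.extendByCompl_rel hT hσ hKσ hxy).2 x.2 y.2

theorem exists_rel_mul_iff_of_mulSaturated (hT : T.MulSaturated) {ρ : S → S → Prop}
    (hρT : ∀ x y, ρ x y → (x ∈ T ↔ y ∈ T)) (x : T) (c : S) :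
    (∃ s : S, ρ x (c * s)) ↔ ∃ d : T, d = c ∧ ∃ s : T, ρ x (d * s : T) := by
  constructor
  · rintro ⟨s, hs⟩
    obtain ⟨hc, hs'⟩ := hT ((hρT _ _ hs).1 x.2)
    exact ⟨⟨c, hc⟩, rfl, ⟨s, hs'⟩, hs⟩
  · rintro ⟨d, rfl, s, hs⟩
    exact ⟨s, hs⟩

theorem RightCoherent.of_mulSaturated (hS : RightCoherent S) (hT : T.MulSaturated) :
    RightCoherent T := by
  rw [rightCoherent_iff] at hS ⊢
  intro r hr a b
  obtain ⟨ρ, hρ, hρr, hρT⟩ := hr.exists_extension hT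
  obtain ⟨⟨C, hC⟩, hann⟩ := hS ρ hρ a b
  refine ⟨⟨C.preimage T.subtype T.subtype_injective.injOn, fun x => ?_⟩, ?_⟩
  · have hCx := hC x
    simp only [exists_rel_mul_iff_of_mulSaturated hT hρT, hρr, Subtype.coe_inj,
      exists_eq_left] at hCx
    rw [hCx]
    simp only [Finset.mem_preimage, Submonoid.subtype_apply]
    exact ⟨fun ⟨_, hc, d, hd, h⟩ => ⟨d, hd ▸ hc, h⟩, fun ⟨d, hd, h⟩ => ⟨d, hd, d, rfl, h⟩⟩
  · have hannT : ∀ u v : S, ρ (a * u) (a * v) → (u ∈ T ↔ v ∈ T) := fun u v h => by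
      simpa only [hT.mul_mem_iff, a.2, true_and] using hρT _ _ h
    simpa only [← Submonoid.coe_mul, hρr] using hann.restrict hT hannT

end Saturated

section RangeTransporter

variable {S N : Type*} [Monoid S] [Monoid N]

/-- The submonoid of those `x : S` for which right multiplication by `x` maps the subsemigroup
`Set.range φ` into itself. As `φ 1` is a left identity of that subsemigroup, this only has to be
tested on `φ 1`. -/
def rangeTransporter (φ : N →ₙ* S) : Submonoid S where
  carrier := {x | φ 1 * x ∈ Set.range φ}
  one_mem' := ⟨1, (mul_one _).symm⟩
  mul_mem' := by
    rintro x y ⟨m, hm⟩ ⟨n, hn⟩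
    refine ⟨m * n, ?_⟩
    calc φ (m * n) = φ m * φ 1 * y := by rw [map_mul, hn, mul_assoc]
      _ = φ 1 * (x * y) := by rw [← map_mul, mul_one, hm, mul_assoc]

theorem exists_leftInverse_rangeTransporter {φ : N →ₙ* S} (hφ : Function.Injective φ) :
    ∃ (f : N →ₙ* rangeTransporter φ) (g : rangeTransporter φ →ₙ* N), Function.LeftInverse g f := by
  have φ_one_mul (n : N) : φ 1 * φ n = φ n := by rw [← map_mul, one_mul]
  choose g hg using fun x : rangeTransporter φ => x.2
  have g_mul (x y : rangeTransporter φ) : g (x * y) = g x * g y := hφ <| by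
    calc φ (g (x * y)) = φ (g x) * y := by rw [hg, hg, Submonoid.coe_mul, mul_assoc]
      _ = φ (g x) * (φ 1 * y) := by rw [← mul_assoc, ← map_mul, mul_one]
      _ = φ (g x * g y) := by rw [map_mul, hg y]
  refine ⟨⟨fun n => ⟨φ n, n, (φ_one_mul n).symm⟩, fun m n => Subtype.ext (map_mul φ m n)⟩,
    ⟨g, g_mul⟩, fun n => hφ ?_⟩
  exact (hg _).trans (φ_one_mul n)

end RangeTransporter

section JClass

variable {S : Type*} [Monoid S] {J : Set S} {e : S}

theorem mem_jClass_of_mul_mul_mem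
    (hJ : ∀ b, b ∈ J ↔ (∃ s t, b = s * e * t) ∧ ∃ s t, e = s * b * t)
    {u x v : S} (h : u * (e * x) * v ∈ J) : e * x ∈ J := by
  obtain ⟨s, t, hst⟩ := ((hJ _).1 h).2
  exact (hJ _).2 ⟨⟨1, x, by rw [one_mul]⟩, s * u, v * t, by simpa only [mul_assoc] using hst⟩

theorem mul_mem_jClass_of_mul_mul_mem (her : ∀ a ∈ J, a * e = a)
    (hJ : ∀ b, b ∈ J ↔ (∃ s t, b = s * e * t) ∧ ∃ s t, e = s * b * t)
    (x y : S) (h : e * (x * y) ∈ J) : e * x ∈ J ∧ e * y ∈ J := by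
  have hx : e * x ∈ J :=
    mem_jClass_of_mul_mul_mem hJ (u := 1) (v := y) (by rwa [one_mul, mul_assoc])
  have hxy : e * (x * y) = e * x * (e * y) * 1 := by
    rw [mul_one, ← mul_assoc (e * x), her _ hx, mul_assoc]
  exact ⟨hx, mem_jClass_of_mul_mul_mem hJ (hxy ▸ h)⟩

end JClass

theorem stmt10_general {S N : Type*} [Monoid S] [Monoid N] (hS : RightCoherent S)
    {φ : N →ₙ* S} (hinj : Function.Injective φ)
    (hφ : ∀ x y, φ 1 * (x * y) ∈ Set.range φ →
      φ 1 * x ∈ Set.range φ ∧ φ 1 * y ∈ Set.range φ) :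
    RightCoherent N := by
  have hT : (rangeTransporter φ).MulSaturated := hφ
  obtain ⟨f, g, hgf⟩ := exists_leftInverse_rangeTransporter hinj
  exact (hS.of_mulSaturated hT).of_leftInverse hgf

theorem stmt10 {S : Type*} [Monoid S] (hS : RightCoherent S)
    (J : Set S)
    (hclosed : ∀ a ∈ J, ∀ b ∈ J, a * b ∈ J)
    (e : S) (he : e ∈ J)
    (hel : ∀ a ∈ J, e * a = a) (her : ∀ a ∈ J, a * e = a)
    (hJclass : ∀ a ∈ J, ∀ b : S,
      (b ∈ J ↔ ((∃ s t : S, b = s * a * t) ∧ (∃ s t : S, a = s * b * t))))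
    (N : Type*) [Monoid N] (φ : N → S)
    (hinj : Function.Injective φ) (hrange : Set.range φ = J)
    (hmulφ : ∀ x y : N, φ (x * y) = φ x * φ y) (h1φ : φ 1 = e) :
    RightCoherent N := by
  subst hrange h1φ
  exact stmt10_general hS (φ := ⟨φ, hmulφ⟩) hinj (mul_mem_jClass_of_mul_mul_mem her (hJclass _ he))
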